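/- Lipschitz estimate in a higher-moment norm: let M, M' > 0 and N ≥ 0, and let V_M be a set of nonnegative functions in L¹(ℝ^d) ∩ L¹_{N+2}(ℝ^d) whose L¹_{N+2}-norms are bounded above by M and whose L¹-norms are bounded below by M'. Then there exists a constant C_{M,M'} > 0 such that for all g, h ∈ V_M, ‖Q[g] − Q[h]‖_{L¹_N} ≤ C_{M,M'} · ‖g − h‖_{L¹_{N+1}}. -/

import Mathlib

noncomputable section
open MeasureTheory Filter Set Real

abbrev Sp (d : ℕ) : Type := EuclideanSpace ℝ (Fin d)

/-- Dispersion relation ω_k = √(λ1 + λ2 |k|²). -/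
def omg (l1 l2 : ℝ) {d : ℕ} (k : Sp d) : ℝ := Real.sqrt (l1 + l2 * ‖k‖ ^ 2)

/-- Zeroth moment 𝔐₀[f] = ∫ f. -/
def M0 {d : ℕ} (f : Sp d → ℝ) : ℝ := ∫ k, f k

/-- Resonance broadening Γ_{k,k1,k2}[f]. -/
def Gam {d : ℕ} (f : Sp d → ℝ) (k k1 k2 : Sp d) : ℝ :=
  (‖k‖ ^ 2 + ‖k1‖ ^ 2 + ‖k2‖ ^ 2) * M0 f

/-- Lorentzian L_f(ζ; k,k1,k2) = Γ/(ζ² + Γ²). -/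
def Lor {d : ℕ} (f : Sp d → ℝ) (z : ℝ) (k k1 k2 : Sp d) : ℝ :=
  Gam f k k1 k2 / (z ^ 2 + Gam f k k1 k2 ^ 2)

/-- Collision kernel |V_{k,k1,k2}|² = |k||k1||k2|. -/
def Vsq {d : ℕ} (k k1 k2 : Sp d) : ℝ := ‖k‖ * ‖k1‖ * ‖k2‖

/-- Collision operator Q[f] after eliminating the Dirac delta enforcing k = k1 + k2. -/
def Qop (l1 l2 : ℝ) {d : ℕ} (f : Sp d → ℝ) (k : Sp d) : ℝ :=
  (∫ k1, Vsq k k1 (k - k1) *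
      Lor f (omg l1 l2 k - omg l1 l2 k1 - omg l1 l2 (k - k1)) k k1 (k - k1) *
      (f k1 * f (k - k1) - f k * f k1 - f k * f (k - k1)))
  - 2 * ∫ k2, Vsq (k + k2) k k2 *
      Lor f (omg l1 l2 (k + k2) - omg l1 l2 k - omg l1 l2 k2) (k + k2) k k2 *
      (f k * f k2 - f k * f (k + k2) - f (k + k2) * f k2)

/-- Weighted L¹ norm ‖g‖_{L¹_N} = ∫ |g| ω^N. -/
def wnorm (l1 l2 N : ℝ) {d : ℕ} (g : Sp d → ℝ) : ℝ := ∫ k, |g k| * omg l1 l2 k ^ N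

/-- N-th moment 𝔐_N[g] = ∫ ω^N g. -/
def Mom (l1 l2 N : ℝ) {d : ℕ} (g : Sp d → ℝ) : ℝ := ∫ k, omg l1 l2 k ^ N * g k


lemma lor_bound (S m z : ℝ) (hS : 0 < S) (hm : 0 < m) :
    0 ≤ (S * m) / (z ^ 2 + (S * m) ^ 2) ∧ (S * m) / (z ^ 2 + (S * m) ^ 2) ≤ 1 / (S * m) := by
  have h : 0 < S * m := mul_pos hS hm
  refine ⟨by positivity, ?_⟩
  rw [div_le_div_iff₀ (by positivity) h]
  nlinarith [sq_nonneg z]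

lemma lor_diff (S m n z : ℝ) (hS : 0 < S) (hm : 0 < m) (hn : 0 < n) :
    |(S * m) / (z ^ 2 + (S * m) ^ 2) - (S * n) / (z ^ 2 + (S * n) ^ 2)|
      ≤ |m - n| / (S * (m * n)) := by
  have ha : 0 < S * m := mul_pos hS hm
  have hb : 0 < S * n := mul_pos hS hn
  have e2 : |m - n| / (S * (m * n)) = |S * m - S * n| / ((S * m) * (S * n)) := by
    rw [← mul_sub, abs_mul, abs_of_pos hS]
    field_simp
  rw [e2]
  generalize S * m = a at *
  generalize S * n = b at *
  have e : a / (z ^ 2 + a ^ 2) - b / (z ^ 2 + b ^ 2)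
      = (a - b) * (a * b * (z ^ 2 - a * b)) / ((z ^ 2 + a ^ 2) * (z ^ 2 + b ^ 2)) / (a * b) := by
    field_simp
    ring
  have hab : 0 < a * b := mul_pos ha hb
  have hD : 0 < (z ^ 2 + a ^ 2) * (z ^ 2 + b ^ 2) := by positivity
  rw [e, abs_div, abs_of_pos hab]
  refine div_le_div_of_nonneg_right ?_ hab.le
  rw [abs_div, abs_of_pos hD, abs_mul, div_le_iff₀ hD]
  gcongr
  rw [abs_le]
  constructor
  · nlinarith [sq_nonneg (z * a - z * b), sq_nonneg z, mul_nonneg (sq_nonneg z) hab.le,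
      mul_nonneg (sq_nonneg z) (sq_nonneg (a-b)), sq_nonneg (z^2), mul_nonneg (sq_nonneg z) (sq_nonneg a), mul_nonneg (sq_nonneg z) (sq_nonneg b)]
  · nlinarith [sq_nonneg (z * a - z * b), sq_nonneg z, mul_nonneg (sq_nonneg z) hab.le,
      mul_nonneg (sq_nonneg z) (sq_nonneg (a-b)), sq_nonneg (z^2), mul_nonneg (sq_nonneg z) (sq_nonneg a), mul_nonneg (sq_nonneg z) (sq_nonneg b)]

/-- the full kernel -/
def kern {d : ℕ} (f : Sp d → ℝ) (z : ℝ) (k k1 k2 : Sp d) : ℝ := Vsq k k1 k2 * Lor f z k k1 k2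

lemma vsq_le {d : ℕ} (k k1 k2 : Sp d) (x : ℝ) (hx : x = ‖k‖ ∨ x = ‖k1‖ ∨ x = ‖k2‖) :
    Vsq k k1 k2 ≤ x * (‖k‖ ^ 2 + ‖k1‖ ^ 2 + ‖k2‖ ^ 2) := by
  unfold Vsq
  have h1 := norm_nonneg k
  have h2 := norm_nonneg k1
  have h3 := norm_nonneg k2
  generalize ‖k‖ = a at *
  generalize ‖k1‖ = b at *
  generalize ‖k2‖ = c at *
  rcases hx with rfl | rfl | rfl
  · have : b * c ≤ x ^ 2 + b ^ 2 + c ^ 2 := by nlinarith [sq_nonneg (b - c)]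
    nlinarith [mul_le_mul_of_nonneg_left this h1]
  · have : a * c ≤ a ^ 2 + x ^ 2 + c ^ 2 := by nlinarith [sq_nonneg (a - c)]
    nlinarith [mul_le_mul_of_nonneg_left this h2]
  · have : a * b ≤ a ^ 2 + b ^ 2 + x ^ 2 := by nlinarith [sq_nonneg (a - b)]
    nlinarith [mul_le_mul_of_nonneg_left this h3]

lemma vsq_nonneg {d : ℕ} (k k1 k2 : Sp d) : 0 ≤ Vsq k k1 k2 := by
  unfold Vsq; positivity

lemma kern_bound {d : ℕ} (f : Sp d → ℝ) (z : ℝ) (k k1 k2 : Sp d) (x M' : ℝ) (hM' : 0 < M')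
    (hf : M' ≤ M0 f) (hx : x = ‖k‖ ∨ x = ‖k1‖ ∨ x = ‖k2‖) :
    |kern f z k k1 k2| ≤ x * (1 / M') := by
  have hx0 : 0 ≤ x := by rcases hx with rfl | rfl | rfl <;> positivity
  have hm : 0 < M0 f := hM'.trans_le hf
  have hV := vsq_le k k1 k2 x hx
  have hV0 := vsq_nonneg k k1 k2
  unfold kern Lor Gam
  generalize hS : ‖k‖ ^ 2 + ‖k1‖ ^ 2 + ‖k2‖ ^ 2 = S at *
  have hS0 : 0 ≤ S := by rw [← hS]; positivity
  rcases hS0.eq_or_lt with h | h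
  · subst h; simp; positivity
  obtain ⟨l1, l2⟩ := lor_bound S (M0 f) z h hm
  rw [abs_of_nonneg (mul_nonneg hV0 l1)]
  calc _ ≤ (x * S) * (1 / (S * M0 f)) := by gcongr
    _ = x * (1 / M0 f) := by field_simp
    _ ≤ _ := by gcongr

lemma kern_diff {d : ℕ} (f g : Sp d → ℝ) (z : ℝ) (k k1 k2 : Sp d) (x M' : ℝ) (hM' : 0 < M')
    (hf : M' ≤ M0 f) (hg : M' ≤ M0 g) (hx : x = ‖k‖ ∨ x = ‖k1‖ ∨ x = ‖k2‖) :
    |kern f z k k1 k2 - kern g z k k1 k2| ≤ x * (|M0 f - M0 g| / M' ^ 2) := by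
  have hx0 : 0 ≤ x := by rcases hx with rfl | rfl | rfl <;> positivity
  have hm : 0 < M0 f := hM'.trans_le hf
  have hm2 : 0 < M0 g := hM'.trans_le hg
  have hV := vsq_le k k1 k2 x hx
  have hV0 := vsq_nonneg k k1 k2
  unfold kern Lor Gam
  generalize hS : ‖k‖ ^ 2 + ‖k1‖ ^ 2 + ‖k2‖ ^ 2 = S at *
  have hS0 : 0 ≤ S := by rw [← hS]; positivity
  rcases hS0.eq_or_lt with h | h
  · subst h; simp; positivity
  have := lor_diff S (M0 f) (M0 g) z h hm hm2
  rw [← mul_sub, abs_mul, abs_of_nonneg hV0]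
  calc _ ≤ (x * S) * (|M0 f - M0 g| / (S * (M0 f * M0 g))) := by gcongr
    _ = x * (|M0 f - M0 g| / (M0 f * M0 g)) := by field_simp
    _ ≤ _ := by rw [sq]; gcongr

lemma omg_pos {l1 l2 : ℝ} (hl1 : 0 < l1) (hl2 : 0 < l2) {d : ℕ} (k : Sp d) :
    0 < omg l1 l2 k := by
  unfold omg; positivity

lemma sqrt_le_omg {l1 l2 : ℝ} (hl2 : 0 < l2) {d : ℕ} (k : Sp d) :
    √l1 ≤ omg l1 l2 k := by
  unfold omg; apply Real.sqrt_le_sqrt; nlinarith [sq_nonneg ‖k‖]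

lemma norm_le_omg {l1 l2 : ℝ} (hl1 : 0 < l1) (hl2 : 0 < l2) {d : ℕ} (k : Sp d) :
    ‖k‖ ≤ omg l1 l2 k / √l2 := by
  rw [le_div_iff₀ (by positivity)]
  unfold omg; apply Real.le_sqrt_of_sq_le
  rw [mul_pow, Real.sq_sqrt hl2.le]; linarith

lemma omg_le {l1 l2 : ℝ} (hl1 : 0 < l1) (hl2 : 0 < l2) {d : ℕ} (k p q : Sp d)
    (h : ‖k‖ ≤ ‖p‖ + ‖q‖) : omg l1 l2 k ≤ (2 / √l1) * (omg l1 l2 p * omg l1 l2 q) := by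
  have hp := omg_pos hl1 hl2 p
  have hq := omg_pos hl1 hl2 q
  have h1 : omg l1 l2 k ≤ omg l1 l2 p + omg l1 l2 q := by
    have e : ∀ x : Sp d, omg l1 l2 x ^ 2 = l1 + l2 * ‖x‖ ^ 2 := fun x => by
      unfold omg; rw [Real.sq_sqrt]; positivity
    have hpq : l2 * (‖p‖ * ‖q‖) ≤ omg l1 l2 p * omg l1 l2 q := by
      have a := norm_le_omg hl1 hl2 p
      have b := norm_le_omg hl1 hl2 q
      calc l2 * (‖p‖ * ‖q‖) ≤ l2 * ((omg l1 l2 p / √l2) * (omg l1 l2 q / √l2)) := by gcongr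
        _ = _ := by
          have : √l2 * √l2 = l2 := Real.mul_self_sqrt hl2.le
          have h0 : √l2 ≠ 0 := by positivity
          field_simp; rw [sq, this]
    apply le_of_sq_le_sq _ (by positivity)
    have e3 : ‖k‖ ^ 2 ≤ (‖p‖ + ‖q‖) ^ 2 := by gcongr
    have := mul_le_mul_of_nonneg_left e3 hl2.le
    nlinarith [e k, e p, e q]
  have s1 := sqrt_le_omg (l1 := l1) hl2 p
  have s2 := sqrt_le_omg (l1 := l1) hl2 q
  have h0 : 0 < √l1 := by positivity
  rw [div_mul_eq_mul_div, le_div_iff₀ h0]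
  nlinarith [mul_le_mul_of_nonneg_right s1 hq.le, mul_le_mul_of_nonneg_left s2 hp.le]

lemma weight_le {l1 l2 N : ℝ} (hl1 : 0 < l1) (hl2 : 0 < l2) (hN : 0 ≤ N) {d : ℕ} (k p q : Sp d)
    (h : ‖k‖ ≤ ‖p‖ + ‖q‖) : omg l1 l2 k ^ N * ‖p‖ ≤
      ((2 / √l1) ^ N / (√l1 * √l2)) * (omg l1 l2 p ^ (N + 1) * omg l1 l2 q ^ (N + 1)) := by
  have hk := omg_pos hl1 hl2 k
  have hp := omg_pos hl1 hl2 p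
  have hq := omg_pos hl1 hl2 q
  have h0 : 0 < √l1 := by positivity
  have h02 : 0 < √l2 := by positivity
  have s2 := sqrt_le_omg (l1 := l1) hl2 q
  calc omg l1 l2 k ^ N * ‖p‖
      ≤ ((2 / √l1) * (omg l1 l2 p * omg l1 l2 q)) ^ N * (omg l1 l2 p / √l2) := by
        gcongr
        · exact omg_le hl1 hl2 k p q h
        · exact norm_le_omg hl1 hl2 p
    _ = ((2 / √l1) ^ N / (√l1 * √l2)) * (omg l1 l2 p ^ (N + 1) * (omg l1 l2 q ^ N * √l1)) := by
        rw [Real.mul_rpow (by positivity) (by positivity), Real.mul_rpow hp.le hq.le,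
          Real.rpow_add_one hp.ne']
        field_simp
    _ ≤ _ := by
        rw [Real.rpow_add_one hq.ne']
        gcongr

/-- pointwise bound for one bilinear term -/
lemma term_bound {l1 l2 N M' : ℝ} (hl1 : 0 < l1) (hl2 : 0 < l2) (hN : 0 ≤ N) (hM' : 0 < M') {d : ℕ}
    (f : Sp d → ℝ) (hf0 : ∀ k, 0 ≤ f k) (hf : M' ≤ M0 f) (z : ℝ) (k k1 k2 r p q : Sp d)
    (hx : ‖p‖ = ‖k‖ ∨ ‖p‖ = ‖k1‖ ∨ ‖p‖ = ‖k2‖) (h : ‖r‖ ≤ ‖p‖ + ‖q‖) :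
    |kern f z k k1 k2 * (f p * f q)| * omg l1 l2 r ^ N ≤
     ((2 / √l1) ^ N / (√l1 * √l2) * (1 / M')) *
       ((f p * omg l1 l2 p ^ (N + 1)) * (f q * omg l1 l2 q ^ (N + 1))) := by
  have hw := weight_le hl1 hl2 hN r p q h
  have hk := kern_bound f z k k1 k2 _ M' hM' hf hx
  have hr := Real.rpow_pos_of_pos (omg_pos hl1 hl2 r) N
  have := hf0 p
  have := hf0 q
  rw [abs_mul, abs_of_nonneg (by positivity : 0 ≤ f p * f q)]
  calc _ ≤ (‖p‖ * (1 / M')) * (f p * f q) * omg l1 l2 r ^ N := by gcongr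
    _ = (omg l1 l2 r ^ N * ‖p‖) * ((1 / M') * (f p * f q)) := by ring
    _ ≤ _ := by
      refine (mul_le_mul_of_nonneg_right hw (by positivity)).trans (le_of_eq (by ring))

/-- weighted majorant -/
def FF {d : ℕ} (A B : Sp d → ℝ) (δ : ℝ) (x : Sp d × Sp d) : ℝ :=
  A x.1 * B x.2 + B x.1 * A x.2 + δ * (B x.1 * B x.2)

lemma term_diff {l1 l2 N M' : ℝ} (hl1 : 0 < l1) (hl2 : 0 < l2) (hN : 0 ≤ N) (hM' : 0 < M') {d : ℕ}
    (g f : Sp d → ℝ) (hg0 : ∀ k, 0 ≤ g k) (hf0 : ∀ k, 0 ≤ f k) (hg : M' ≤ M0 g)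
    (hf : M' ≤ M0 f) (z : ℝ) (k k1 k2 r p q : Sp d)
    (hx : ‖p‖ = ‖k‖ ∨ ‖p‖ = ‖k1‖ ∨ ‖p‖ = ‖k2‖) (h : ‖r‖ ≤ ‖p‖ + ‖q‖) :
    |kern g z k k1 k2 * (g p * g q) - kern f z k k1 k2 * (f p * f q)| * omg l1 l2 r ^ N ≤
     ((2 / √l1) ^ N / (√l1 * √l2) * (1 / M' + 1 / M' ^ 2)) *
       FF (fun k => |g k - f k| * omg l1 l2 k ^ (N + 1))
         (fun k => (g k + f k) * omg l1 l2 k ^ (N + 1)) |M0 g - M0 f| (p, q) := by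
  have hw := weight_le hl1 hl2 hN r p q h
  have hk := kern_bound g z k k1 k2 _ M' hM' hg hx
  have hd := kern_diff g f z k k1 k2 _ M' hM' hg hf hx
  have hr := Real.rpow_pos_of_pos (omg_pos hl1 hl2 r) N
  have hp := Real.rpow_pos_of_pos (omg_pos hl1 hl2 p) (N + 1)
  have hq := Real.rpow_pos_of_pos (omg_pos hl1 hl2 q) (N + 1)
  have gp := hg0 p
  have gq := hg0 q
  have fp := hf0 p
  have fq := hf0 q
  unfold FF
  simp only
  generalize kern g z k k1 k2 = Kg at *
  generalize kern f z k k1 k2 = Kf at *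
  generalize omg l1 l2 p ^ (N + 1) = P at *
  generalize omg l1 l2 q ^ (N + 1) = Q at *
  generalize omg l1 l2 r ^ N = R at *
  have hc : 0 ≤ (2 / √l1) ^ N / (√l1 * √l2) := by positivity
  generalize (2 / √l1) ^ N / (√l1 * √l2) = c at *
  have hδ : 0 ≤ |M0 g - M0 f| := abs_nonneg _
  generalize |M0 g - M0 f| = δ at *
  have e : Kg * (g p * g q) - Kf * (f p * f q) =
    Kg * ((g p - f p) * g q) + Kg * (f p * (g q - f q)) + (Kg - Kf) * (f p * f q) := by ring
  have e2 : |Kg * (g p * g q) - Kf * (f p * f q)| ≤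
      |Kg| * (|g p - f p| * g q) + |Kg| * (f p * |g q - f q|) + |Kg - Kf| * (f p * f q) := by
    rw [e]
    refine (abs_add_three _ _ _).trans (le_of_eq ?_)
    simp only [abs_mul, abs_of_nonneg fp, abs_of_nonneg fq, abs_of_nonneg gq]
  have hA := abs_nonneg (g p - f p)
  have hB := abs_nonneg (g q - f q)
  generalize |g p - f p| = a at *
  generalize |g q - f q| = b at *
  calc _ ≤ (‖p‖ * (1 / M') * (a * g q) + ‖p‖ * (1 / M') * (f p * b) +
          ‖p‖ * (δ / M' ^ 2) * (f p * f q)) * R := by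
        refine mul_le_mul_of_nonneg_right (e2.trans ?_) hr.le
        gcongr
    _ = (R * ‖p‖) * ((1 / M') * (a * g q) + (1 / M') * (f p * b) + (δ / M' ^ 2) * (f p * f q)) := by
        ring
    _ ≤ (c * (P * Q)) * ((1 / M') * (a * (g q + f q)) + (1 / M') * ((g p + f p) * b)
          + (δ / M' ^ 2) * ((g p + f p) * (g q + f q))) := by
        gcongr <;> linarith
    _ ≤ (c * (P * Q)) * ((1 / M' + 1 / M' ^ 2) * (a * (g q + f q)) +
          (1 / M' + 1 / M' ^ 2) * ((g p + f p) * b)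
          + (1 / M' + 1 / M' ^ 2) * (δ * ((g p + f p) * (g q + f q)))) := by
        have i1 : 1 / M' ≤ 1 / M' + 1 / M' ^ 2 := by
          have : 0 < 1 / M' ^ 2 := by positivity
          linarith
        have i2 : δ / M' ^ 2 * ((g p + f p) * (g q + f q))
            ≤ (1 / M' + 1 / M' ^ 2) * (δ * ((g p + f p) * (g q + f q))) := by
          have : 0 < 1 / M' := by positivity
          have i3 : 1 / M' ^ 2 ≤ 1 / M' + 1 / M' ^ 2 := by linarith
          calc _ = 1 / M' ^ 2 * (δ * ((g p + f p) * (g q + f q))) := by ring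
            _ ≤ _ := by gcongr
        gcongr
    _ = _ := by ring

lemma half {d : ℕ} (w : Sp d → ℝ) (hw : ∀ k, 0 < w k) (J1 J2 : Sp d → Sp d → ℝ)
    (E1 E2 E : Sp d × Sp d → ℝ) (h1 : Integrable E1 (volume.prod volume))
    (h2 : Integrable E2 (volume.prod volume)) (h : Integrable E (volume.prod volume))
    (m1 : ∀ k, AEStronglyMeasurable (J1 k)) (m2 : ∀ k, AEStronglyMeasurable (J2 k))
    (b1 : ∀ k x, |J1 k x| * w k ≤ E1 (k, x)) (b2 : ∀ k x, |J2 k x| * w k ≤ E2 (k, x))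
    (b : ∀ k x, |J1 k x - J2 k x| * w k ≤ E (k, x)) :
    ∀ᵐ k, |(∫ x, J1 k x) - ∫ x, J2 k x| * w k ≤ ∫ x, E (k, x) := by
  filter_upwards [h1.prod_right_ae, h2.prod_right_ae, h.prod_right_ae] with k i1 i2 i
  have j1 : Integrable (J1 k) := by
    refine (i1.mul_const (w k)⁻¹).mono' (m1 k) (ae_of_all _ fun x => ?_)
    rw [Real.norm_eq_abs, ← div_eq_mul_inv, le_div_iff₀ (hw k)]; exact b1 k x
  have j2 : Integrable (J2 k) := by
    refine (i2.mul_const (w k)⁻¹).mono' (m2 k) (ae_of_all _ fun x => ?_)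
    rw [Real.norm_eq_abs, ← div_eq_mul_inv, le_div_iff₀ (hw k)]; exact b2 k x
  rw [← integral_sub j1 j2]
  calc _ ≤ (∫ x, |J1 k x - J2 k x|) * w k := by
        have := (hw k).le
        gcongr
        exact abs_integral_le_integral_abs
    _ = ∫ x, |J1 k x - J2 k x| * w k := by rw [integral_mul_const]
    _ ≤ _ := integral_mono ((j1.sub j2).abs.mul_const _) i (b k)

/-- sum over three measure preserving substitutions -/
lemma three {d : ℕ} (F : Sp d × Sp d → ℝ) (hF : Integrable F (volume.prod volume))
    (T1 T2 T3 : Sp d × Sp d → Sp d × Sp d)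
    (h1 : MeasurePreserving T1 (volume.prod volume) (volume.prod volume))
    (h2 : MeasurePreserving T2 (volume.prod volume) (volume.prod volume))
    (h3 : MeasurePreserving T3 (volume.prod volume) (volume.prod volume)) (C : ℝ) :
    Integrable (fun x => C * (F (T1 x) + F (T2 x) + F (T3 x))) (volume.prod volume) ∧
    ∫ k, ∫ x, C * (F (T1 (k, x)) + F (T2 (k, x)) + F (T3 (k, x))) =
      3 * C * ∫ x, F x ∂(volume.prod volume) := by
  have a : ∀ T : Sp d × Sp d → Sp d × Sp d,
      MeasurePreserving T (volume.prod volume) (volume.prod volume) →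
      Integrable (fun x => F (T x)) (volume.prod volume) ∧
      ∫ x, F (T x) ∂(volume.prod volume) = ∫ x, F x ∂(volume.prod volume) := by
    intro T hT
    refine ⟨hT.integrable_comp_of_integrable hF, ?_⟩
    have := integral_map (μ := (volume.prod volume : Measure (Sp d × Sp d))) hT.aemeasurable (f := F) (by rw [hT.map_eq]; exact hF.aestronglyMeasurable)
    rw [hT.map_eq] at this
    exact this.symm
  obtain ⟨i1, e1⟩ := a T1 h1
  obtain ⟨i2, e2⟩ := a T2 h2
  obtain ⟨i3, e3⟩ := a T3 h3
  have I : Integrable (fun x => C * (F (T1 x) + F (T2 x) + F (T3 x))) (volume.prod volume) :=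
    ((i1.add i2).add i3).const_mul C
  refine ⟨I, ?_⟩
  have i12 : Integrable (fun x => F (T1 x) + F (T2 x)) (volume.prod volume) := i1.add i2
  rw [← integral_prod _ I, integral_const_mul, integral_add i12 i3, integral_add i1 i2,
    e1, e2, e3]
  ring

lemma mpA {d : ℕ} : MeasurePreserving (fun x : Sp d × Sp d => (x.2, x.1 - x.2))
    (volume.prod volume) (volume.prod volume) := by
  have := (measurePreserving_prod_neg_add (volume : Measure (Sp d)) (volume : Measure (Sp d))).comp
    (Measure.measurePreserving_swap (μ := (volume : Measure (Sp d))) (ν := (volume : Measure (Sp d))))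
  convert this using 2 with x
  simp; abel

lemma mpB {d : ℕ} : MeasurePreserving (fun x : Sp d × Sp d => (x.1, x.2))
    (volume.prod volume) (volume.prod volume) := MeasurePreserving.id _

lemma mpC {d : ℕ} : MeasurePreserving (fun x : Sp d × Sp d => (x.1, x.1 - x.2))
    (volume.prod volume) (volume.prod volume) := by
  have := (measurePreserving_prod_add (volume : Measure (Sp d)) (volume : Measure (Sp d))).comp
    ((MeasurePreserving.id (volume : Measure (Sp d))).prod
      (Measure.measurePreserving_neg (volume : Measure (Sp d))))
  convert this using 2 with x
  simp [sub_eq_add_neg]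

lemma mpD {d : ℕ} : MeasurePreserving (fun x : Sp d × Sp d => (x.1, x.1 + x.2))
    (volume.prod volume) (volume.prod volume) :=
  measurePreserving_prod_add (volume : Measure (Sp d)) (volume : Measure (Sp d))

lemma mpE {d : ℕ} : MeasurePreserving (fun x : Sp d × Sp d => (x.1 + x.2, x.2))
    (volume.prod volume) (volume.prod volume) := by
  have s := (Measure.measurePreserving_swap (μ := (volume : Measure (Sp d))) (ν := (volume : Measure (Sp d))))
  have := s.comp (mpD.comp s)
  convert this using 2 with x
  simp [add_comm]

lemma three_diff (Kg Kf a b c a' b' c' w C x1 x2 x3 : ℝ) (hw : 0 ≤ w)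
    (h1 : |Kg * a - Kf * a'| * w ≤ C * x1) (h2 : |Kg * b - Kf * b'| * w ≤ C * x2)
    (h3 : |Kg * c - Kf * c'| * w ≤ C * x3) :
    |Kg * (a - b - c) - Kf * (a' - b' - c')| * w ≤ C * (x1 + x2 + x3) := by
  have e : Kg * (a - b - c) - Kf * (a' - b' - c') =
    (Kg * a - Kf * a') - (Kg * b - Kf * b') - (Kg * c - Kf * c') := by ring
  have : |Kg * (a - b - c) - Kf * (a' - b' - c')| ≤
      |Kg * a - Kf * a'| + |Kg * b - Kf * b'| + |Kg * c - Kf * c'| := by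
    rw [e]
    refine (abs_sub _ _).trans ?_
    have := abs_sub (Kg * a - Kf * a') (Kg * b - Kf * b')
    linarith
  have := mul_le_mul_of_nonneg_right this hw
  linarith

lemma three_bound (Kg a b c w C x1 x2 x3 : ℝ) (hw : 0 ≤ w)
    (h1 : |Kg * a| * w ≤ C * x1) (h2 : |Kg * b| * w ≤ C * x2)
    (h3 : |Kg * c| * w ≤ C * x3) :
    |Kg * (a - b - c)| * w ≤ C * (x1 + x2 + x3) := by
  have := three_diff Kg 0 a b c 0 0 0 w C x1 x2 x3 hw (by simpa using h1) (by simpa using h2)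
    (by simpa using h3)
  simpa using this

/-- first integrand -/
def JA (l1 l2 : ℝ) {d : ℕ} (f : Sp d → ℝ) (k k1 : Sp d) : ℝ :=
  kern f (omg l1 l2 k - omg l1 l2 k1 - omg l1 l2 (k - k1)) k k1 (k - k1) *
      (f k1 * f (k - k1) - f k * f k1 - f k * f (k - k1))

/-- second integrand -/
def JB (l1 l2 : ℝ) {d : ℕ} (f : Sp d → ℝ) (k k2 : Sp d) : ℝ :=
  kern f (omg l1 l2 (k + k2) - omg l1 l2 k - omg l1 l2 k2) (k + k2) k k2 *
      (f k * f k2 - f k * f (k + k2) - f (k + k2) * f k2)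

lemma Qop_eq (l1 l2 : ℝ) {d : ℕ} (f : Sp d → ℝ) (k : Sp d) :
    Qop l1 l2 f k = (∫ x, JA l1 l2 f k x) - 2 * ∫ x, JB l1 l2 f k x := rfl

lemma omg_meas (l1 l2 : ℝ) {d : ℕ} : Measurable (omg l1 l2 (d := d)) := by
  unfold omg; fun_prop

lemma JA_meas (l1 l2 : ℝ) {d : ℕ} (f : Sp d → ℝ) (hf : Integrable f) (k : Sp d) :
    AEStronglyMeasurable (JA l1 l2 f k) := by
  have m1 := hf.aestronglyMeasurable
  have m2 : AEStronglyMeasurable (fun x => f (k - x)) :=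
    m1.comp_measurePreserving (Measure.measurePreserving_sub_left volume k)
  have o := omg_meas l1 l2 (d := d)
  have o2 : Measurable (fun x : Sp d => omg l1 l2 (k - x)) := o.comp (by fun_prop)
  unfold JA
  refine AEStronglyMeasurable.mul ?_ (((m1.mul m2).sub (m1.const_mul _)).sub (m2.const_mul _))
  apply Measurable.aestronglyMeasurable
  unfold kern Vsq Lor Gam
  fun_prop

lemma JB_meas (l1 l2 : ℝ) {d : ℕ} (f : Sp d → ℝ) (hf : Integrable f) (k : Sp d) :
    AEStronglyMeasurable (JB l1 l2 f k) := by
  have m1 := hf.aestronglyMeasurable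
  have m2 : AEStronglyMeasurable (fun x => f (k + x)) :=
    m1.comp_measurePreserving (measurePreserving_add_left volume k)
  have o := omg_meas l1 l2 (d := d)
  have o2 : Measurable (fun x : Sp d => omg l1 l2 (k + x)) := o.comp (by fun_prop)
  unfold JB
  refine AEStronglyMeasurable.mul ?_ (((m1.const_mul _).sub (m2.const_mul _)).sub (m2.mul m1))
  apply Measurable.aestronglyMeasurable
  unfold kern Vsq Lor Gam
  fun_prop

lemma int_low {l1 l2 N : ℝ} (hl1 : 0 < l1) (hl2 : 0 < l2) {d : ℕ} (g : Sp d → ℝ)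
    (hg : Integrable g) (h : Integrable (fun k => |g k| * omg l1 l2 k ^ (N + 2))) :
    Integrable (fun k => g k * omg l1 l2 k ^ (N + 1)) ∧
    ∫ k, |g k| * omg l1 l2 k ^ (N + 1) ≤ (1 / √l1) * wnorm l1 l2 (N + 2) g := by
  have b : ∀ k, |g k| * omg l1 l2 k ^ (N + 1) ≤ (1 / √l1) * (|g k| * omg l1 l2 k ^ (N + 2)) := by
    intro k
    have hk := omg_pos hl1 hl2 k
    have h0 : 0 < √l1 := by positivity
    have s := sqrt_le_omg (l1 := l1) hl2 k
    rw [show N + 2 = (N + 1) + 1 by ring, Real.rpow_add_one hk.ne' (N + 1), div_mul_eq_mul_div,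
      le_div_iff₀ h0, one_mul, mul_assoc]
    gcongr
  have m : AEStronglyMeasurable (fun k => g k * omg l1 l2 k ^ (N + 1)) :=
    hg.aestronglyMeasurable.mul ((omg_meas l1 l2).pow_const _).aestronglyMeasurable
  have I := h.const_mul (1 / √l1)
  have I2 : Integrable (fun k => g k * omg l1 l2 k ^ (N + 1)) := by
    refine I.mono' m (ae_of_all _ fun k => ?_)
    have := Real.rpow_pos_of_pos (omg_pos hl1 hl2 k) (N + 1)
    rw [Real.norm_eq_abs, abs_mul, abs_of_pos this]
    exact b k
  refine ⟨I2, ?_⟩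
  unfold wnorm
  rw [← integral_const_mul]
  exact integral_mono_of_nonneg (ae_of_all _ fun k => by
    have := Real.rpow_pos_of_pos (omg_pos hl1 hl2 k) (N + 1)
    show 0 ≤ _
    positivity) I (ae_of_all _ b)

/-- Lipschitz estimate in a higher-moment norm: for M, M' > 0 and N ≥ 0,
there is C_{M,M'} > 0 such that for all nonnegative g, h ∈ L¹ ∩ L¹_{N+2} with L¹_{N+2}
norms ≤ M and L¹ norms ≥ M', ‖Q[g] − Q[h]‖_{L¹_N} ≤ C·‖g − h‖_{L¹_{N+1}}. -/
theorem collision_lipschitz_higher_moment {d : ℕ} (hd : 2 ≤ d) (l1 l2 M M' N : ℝ)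
    (hl1 : 0 < l1) (hl2 : 0 < l2) (hM : 0 < M) (hM' : 0 < M') (hN : 0 ≤ N) :
    ∃ C > (0 : ℝ), ∀ g h : Sp d → ℝ,
      (∀ k, 0 ≤ g k) → (∀ k, 0 ≤ h k) →
      Integrable g → Integrable h →
      Integrable (fun k => |g k| * omg l1 l2 k ^ (N + 2)) →
      Integrable (fun k => |h k| * omg l1 l2 k ^ (N + 2)) →
      wnorm l1 l2 (N + 2) g ≤ M → wnorm l1 l2 (N + 2) h ≤ M →
      M' ≤ ∫ k, |g k| → M' ≤ ∫ k, |h k| →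
      wnorm l1 l2 N (fun k => Qop l1 l2 g k - Qop l1 l2 h k) ≤
        C * wnorm l1 l2 (N + 1) (fun k => g k - h k) := by
  set c : ℝ := (2 / √l1) ^ N / (√l1 * √l2) with hc
  have hc0 : 0 < c := by rw [hc]; positivity
  set C1 : ℝ := c * (1 / M' + 1 / M' ^ 2) with hC1
  have hC10 : 0 < C1 := by rw [hC1]; positivity
  set b0 : ℝ := 2 * ((1 / √l1) * M) with hb0
  have hb00 : 0 < b0 := by rw [hb0]; positivity
  set c3 : ℝ := (√l1 ^ (N + 1))⁻¹ with hc3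
  have hc30 : 0 < c3 := by rw [hc3]; positivity
  refine ⟨9 * C1 * (2 * b0 + c3 * b0 ^ 2), by positivity, ?_⟩
  intro g h hg0 hh0 ig ih igN ihN wg wh mg mh
  have hmg : M' ≤ M0 g := by
    refine mg.trans_eq (integral_congr_ae (ae_of_all _ fun k => abs_of_nonneg (hg0 k)))
  have hmh : M' ≤ M0 h := by
    refine mh.trans_eq (integral_congr_ae (ae_of_all _ fun k => abs_of_nonneg (hh0 k)))
  obtain ⟨Ig, bg⟩ := int_low hl1 hl2 g ig igN
  obtain ⟨Ih, bh⟩ := int_low hl1 hl2 h ih ihN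
  have hW : ∀ k : Sp d, 0 < omg l1 l2 k ^ (N + 1) := fun k =>
    Real.rpow_pos_of_pos (omg_pos hl1 hl2 k) (N + 1)
  have hwN : ∀ k : Sp d, 0 < omg l1 l2 k ^ N := fun k =>
    Real.rpow_pos_of_pos (omg_pos hl1 hl2 k) N
  set A : Sp d → ℝ := fun k => |g k - h k| * omg l1 l2 k ^ (N + 1) with hA
  set B : Sp d → ℝ := fun k => (g k + h k) * omg l1 l2 k ^ (N + 1) with hB
  set Wg : Sp d → ℝ := fun k => g k * omg l1 l2 k ^ (N + 1) with hWg
  set Wh : Sp d → ℝ := fun k => h k * omg l1 l2 k ^ (N + 1) with hWh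
  set δ : ℝ := |M0 g - M0 h| with hδ
  have IA : Integrable A := by
    refine (Ig.sub Ih).abs.congr (ae_of_all _ fun k => ?_)
    simp only [hA, hWg, hWh, Pi.sub_apply]
    rw [← sub_mul, abs_mul, abs_of_pos (hW k)]
  have IB : Integrable B := by
    refine (Ig.add Ih).congr (ae_of_all _ fun k => ?_)
    simp only [hB, hWg, hWh, Pi.add_apply]
    ring
  have eA : wnorm l1 l2 (N + 1) (fun k => g k - h k) = ∫ k, A k := rfl
  have hA0 : 0 ≤ ∫ k, A k := integral_nonneg fun k => mul_nonneg (abs_nonneg _) (hW k).le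
  have hB0 : 0 ≤ ∫ k, B k :=
    integral_nonneg fun k => mul_nonneg (add_nonneg (hg0 k) (hh0 k)) (hW k).le
  have hBb : ∫ k, B k ≤ b0 := by
    have e : ∫ k, B k = (∫ k, |g k| * omg l1 l2 k ^ (N + 1)) +
        ∫ k, |h k| * omg l1 l2 k ^ (N + 1) := by
      simp only [abs_of_nonneg (hg0 _), abs_of_nonneg (hh0 _)]
      rw [← integral_add Ig Ih]
      refine integral_congr_ae (ae_of_all _ fun k => ?_)
      simp only [hB, hWg, hWh]
      ring
    have h0 : 0 ≤ 1 / √l1 := by positivity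
    have t1 := mul_le_mul_of_nonneg_left wg h0
    have t2 := mul_le_mul_of_nonneg_left wh h0
    rw [e, hb0]; linarith
  have hδb : δ ≤ c3 * ∫ k, A k := by
    have e : M0 g - M0 h = ∫ k, (g k - h k) := (integral_sub ig ih).symm
    rw [hδ, e, ← integral_const_mul]
    refine abs_integral_le_integral_abs.trans (integral_mono (ig.sub ih).abs (IA.const_mul _) ?_)
    intro k
    have s : √l1 ^ (N + 1) ≤ omg l1 l2 k ^ (N + 1) :=
      Real.rpow_le_rpow (by positivity) (sqrt_le_omg hl2 k) (by linarith)
    have h0 : 0 < √l1 ^ (N + 1) := by positivity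
    simp only [hc3, hA]
    rw [inv_mul_eq_div, le_div_iff₀ h0]
    gcongr
  have hFI : Integrable (FF A B δ) (volume.prod volume) ∧
      ∫ x, FF A B δ x ∂(volume.prod volume) = 2 * ((∫ k, A k) * ∫ k, B k) + δ * (∫ k, B k) ^ 2 := by
    have i1 : Integrable (fun x : Sp d × Sp d => A x.1 * B x.2) (volume.prod volume) :=
      IA.mul_prod IB
    have i2 : Integrable (fun x : Sp d × Sp d => B x.1 * A x.2) (volume.prod volume) :=
      IB.mul_prod IA
    have i3 : Integrable (fun x : Sp d × Sp d => δ * (B x.1 * B x.2)) (volume.prod volume) :=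
      (IB.mul_prod IB).const_mul δ
    have i12 : Integrable (fun x : Sp d × Sp d => A x.1 * B x.2 + B x.1 * A x.2)
      (volume.prod volume) := i1.add i2
    refine ⟨i12.add i3, ?_⟩
    unfold FF
    rw [integral_add i12 i3, integral_add i1 i2, integral_const_mul, integral_prod_mul,
      integral_prod_mul, integral_prod_mul]
    ring
  obtain ⟨IF, eF⟩ := hFI
  have IGg : Integrable (fun x : Sp d × Sp d => Wg x.1 * Wg x.2) (volume.prod volume) :=
    Ig.mul_prod Ig
  have IGh : Integrable (fun x : Sp d × Sp d => Wh x.1 * Wh x.2) (volume.prod volume) :=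
    Ih.mul_prod Ih
  obtain ⟨IE1, eE1⟩ := three (FF A B δ) IF _ _ _ mpA mpB mpC C1
  obtain ⟨IE2, eE2⟩ := three (FF A B δ) IF _ _ _ mpB mpD mpE C1
  have ng : ∀ k k1 : Sp d, ‖k‖ ≤ ‖k1‖ + ‖k - k1‖ := fun k k1 => by
    simpa using norm_add_le k1 (k - k1)
  have na : ∀ k k1 : Sp d, ‖k‖ ≤ ‖k + k1‖ + ‖k1‖ := fun k k1 => by
    simpa using norm_sub_le (k + k1) k1
  have nt : ∀ k k1 : Sp d, ‖k‖ ≤ ‖k‖ + ‖k1‖ := fun k k1 => by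
    linarith [norm_nonneg k1]
  have hA1 := half (fun k => omg l1 l2 k ^ N) hwN (JA l1 l2 g) (JA l1 l2 h) _ _ _
    (three _ IGg _ _ _ mpA mpB mpC (c * (1 / M'))).1
    (three _ IGh _ _ _ mpA mpB mpC (c * (1 / M'))).1 IE1
    (JA_meas l1 l2 g ig) (JA_meas l1 l2 h ih)
    (fun k x => three_bound _ _ _ _ _ _ _ _ _ (hwN k).le
      (term_bound hl1 hl2 hN hM' g hg0 hmg _ _ _ _ _ _ _ (by simp) (ng _ _))
      (term_bound hl1 hl2 hN hM' g hg0 hmg _ _ _ _ _ _ _ (by simp) (nt _ _))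
      (term_bound hl1 hl2 hN hM' g hg0 hmg _ _ _ _ _ _ _ (by simp) (nt _ _)))
    (fun k x => three_bound _ _ _ _ _ _ _ _ _ (hwN k).le
      (term_bound hl1 hl2 hN hM' h hh0 hmh _ _ _ _ _ _ _ (by simp) (ng _ _))
      (term_bound hl1 hl2 hN hM' h hh0 hmh _ _ _ _ _ _ _ (by simp) (nt _ _))
      (term_bound hl1 hl2 hN hM' h hh0 hmh _ _ _ _ _ _ _ (by simp) (nt _ _)))
    (fun k x => three_diff _ _ _ _ _ _ _ _ _ _ _ _ _ (hwN k).le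
      (term_diff hl1 hl2 hN hM' g h hg0 hh0 hmg hmh _ _ _ _ _ _ _ (by simp) (ng _ _))
      (term_diff hl1 hl2 hN hM' g h hg0 hh0 hmg hmh _ _ _ _ _ _ _ (by simp) (nt _ _))
      (term_diff hl1 hl2 hN hM' g h hg0 hh0 hmg hmh _ _ _ _ _ _ _ (by simp) (nt _ _)))
  have hB1 := half (fun k => omg l1 l2 k ^ N) hwN (JB l1 l2 g) (JB l1 l2 h) _ _ _
    (three _ IGg _ _ _ mpB mpD mpE (c * (1 / M'))).1
    (three _ IGh _ _ _ mpB mpD mpE (c * (1 / M'))).1 IE2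
    (JB_meas l1 l2 g ig) (JB_meas l1 l2 h ih)
    (fun k x => three_bound _ _ _ _ _ _ _ _ _ (hwN k).le
      (term_bound hl1 hl2 hN hM' g hg0 hmg _ _ _ _ _ _ _ (by simp) (nt _ _))
      (term_bound hl1 hl2 hN hM' g hg0 hmg _ _ _ _ _ _ _ (by simp) (nt _ _))
      (term_bound hl1 hl2 hN hM' g hg0 hmg _ _ _ _ _ _ _ (by simp) (na _ _)))
    (fun k x => three_bound _ _ _ _ _ _ _ _ _ (hwN k).le
      (term_bound hl1 hl2 hN hM' h hh0 hmh _ _ _ _ _ _ _ (by simp) (nt _ _))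
      (term_bound hl1 hl2 hN hM' h hh0 hmh _ _ _ _ _ _ _ (by simp) (nt _ _))
      (term_bound hl1 hl2 hN hM' h hh0 hmh _ _ _ _ _ _ _ (by simp) (na _ _)))
    (fun k x => three_diff _ _ _ _ _ _ _ _ _ _ _ _ _ (hwN k).le
      (term_diff hl1 hl2 hN hM' g h hg0 hh0 hmg hmh _ _ _ _ _ _ _ (by simp) (nt _ _))
      (term_diff hl1 hl2 hN hM' g h hg0 hh0 hmg hmh _ _ _ _ _ _ _ (by simp) (nt _ _))
      (term_diff hl1 hl2 hN hM' g h hg0 hh0 hmg hmh _ _ _ _ _ _ _ (by simp) (na _ _)))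
  have L1 := IE1.integral_prod_left
  have L2 := IE2.integral_prod_left
  have key : wnorm l1 l2 N (fun k => Qop l1 l2 g k - Qop l1 l2 h k) ≤
      9 * C1 * ∫ x, FF A B δ x ∂(volume.prod volume) := by
    unfold wnorm
    refine (integral_mono_of_nonneg (ae_of_all _ fun k =>
      mul_nonneg (abs_nonneg _) (hwN k).le) (L1.add (L2.const_mul 2)) ?_).trans ?_
    · filter_upwards [hA1, hB1] with k ha hb
      simp only [Qop_eq, Pi.add_apply]
      have e : ∀ a b a' b' : ℝ, |a - 2 * b - (a' - 2 * b')| ≤ |a - a'| + 2 * |b - b'| := by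
        intro a b a' b'
        rw [show a - 2 * b - (a' - 2 * b') = (a - a') - 2 * (b - b') by ring]
        refine (abs_sub _ _).trans ?_
        rw [abs_mul, abs_two]
      refine (mul_le_mul_of_nonneg_right (e _ _ _ _) (hwN k).le).trans ?_
      rw [add_mul, mul_assoc]
      exact add_le_add ha (mul_le_mul_of_nonneg_left hb zero_le_two)
    · simp only [Pi.add_apply]
      rw [integral_add L1 (L2.const_mul 2), integral_const_mul, eE1, eE2]
      linarith
  rw [eA]
  refine key.trans ?_
  rw [eF, mul_assoc (9 * C1)]
  refine mul_le_mul_of_nonneg_left ?_ (by positivity)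
  have q : δ * (∫ k, B k) ^ 2 ≤ (c3 * ∫ k, A k) * b0 ^ 2 := by gcongr
  have q2 : (∫ k, A k) * (∫ k, B k) ≤ (∫ k, A k) * b0 := by gcongr
  linarith
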